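/- Let X = {j_1,…,j_k} be a vertex. Then, as λ → +∞ along the real axis, the integral ∫_{C⁺_X} e^{−λ f_0(x)} (∏_{j=1}^N |f_j(x)|^{α_j}) · |det(l_{j_1},…,l_{j_k})| · (∏_{j∈X} |f_j(x)|)^{−1} dx is asymptotically equivalent to e^{−λ f_0(X)} · λ^{−α_X} · ∏_{j∈X} Γ(α_j) |l_j(e_{X∖{j}})|^{α_j} · ∏_{r∉X} |f_r(X)|^{α_r}, where det(l_{j_1},…,l_{j_k}) is the determinant of the matrix whose rows are the linear forms l_{j_1},…,l_{j_k} in the standard coordinates, and Γ is the Gamma function. -/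

import Mathlib

open Set MeasureTheory Filter
open scoped Classical Real

noncomputable section

namespace HypArr

variable {k N : ℕ}

/-- The hyperplane `H j = f j ⁻¹ (0)` of the `j`-th affine form. -/
def Hyp (f : Fin N → ((Fin k → ℝ) →ᵃ[ℝ] ℝ)) (j : Fin N) : Set (Fin k → ℝ) :=
  {x | f j x = 0}

/-- The complement `ℝ^k ∖ (H 1 ∪ ⋯ ∪ H N)` of the union of all the hyperplanes. -/
def HypCompl (f : Fin N → ((Fin k → ℝ) →ᵃ[ℝ] ℝ)) : Set (Fin k → ℝ) :=
  {x | ∀ j, f j x ≠ 0}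

/-- `Δ` is an arrangement domain: a connected component of `ℝ^k ∖ (H 1 ∪ ⋯ ∪ H N)`. -/
def IsDomain (f : Fin N → ((Fin k → ℝ) →ᵃ[ℝ] ℝ)) (Δ : Set (Fin k → ℝ)) : Prop :=
  ∃ x ∈ HypCompl f, Δ = connectedComponentIn (HypCompl f) x

/-- The hyperplanes `H 1, …, H N` are in generic position in `ℝ^k`: they are pairwise
distinct, any `k` of them intersect in exactly one point, and any `k+1` of them have
empty intersection. -/
def Generic (f : Fin N → ((Fin k → ℝ) →ᵃ[ℝ] ℝ)) : Prop :=
  (∀ i j : Fin N, i ≠ j → Hyp f i ≠ Hyp f j) ∧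
  (∀ S : Finset (Fin N), S.card = k → ∃! x : Fin k → ℝ, ∀ j ∈ S, f j x = 0) ∧
  (∀ S : Finset (Fin N), S.card = k + 1 → ¬ ∃ x : Fin k → ℝ, ∀ j ∈ S, f j x = 0)

/-- `X` is a vertex of the arrangement. -/
def IsVertex (f : Fin N → ((Fin k → ℝ) →ᵃ[ℝ] ℝ)) (X : Fin k → ℝ) : Prop :=
  ∃ S : Finset (Fin N), S.card = k ∧ ∀ j ∈ S, f j X = 0

/-- `X` is the vertex of the arrangement with index set `S`. -/
def IsVertexOf (f : Fin N → ((Fin k → ℝ) →ᵃ[ℝ] ℝ)) (S : Finset (Fin N))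
    (X : Fin k → ℝ) : Prop :=
  S.card = k ∧ ∀ j ∈ S, f j X = 0

/-- The linear form `f0` is in general position with respect to the arrangement:
it takes pairwise distinct values at the vertices and is nonconstant on each
line `L_U = ∩_{j ∈ U} H j` for `U` of cardinality `k - 1`. -/
def GenericLin (f : Fin N → ((Fin k → ℝ) →ᵃ[ℝ] ℝ)) (f0 : (Fin k → ℝ) →ₗ[ℝ] ℝ) : Prop :=
  (∀ X Y : Fin k → ℝ, IsVertex f X → IsVertex f Y → X ≠ Y → f0 X ≠ f0 Y) ∧
  ∀ U : Finset (Fin N), U.card = k - 1 →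
    ∃ x y : Fin k → ℝ, (∀ j ∈ U, f j x = 0) ∧ (∀ j ∈ U, f j y = 0) ∧ f0 x ≠ f0 y

/-- `C` is a connected component of `ℝ^k ∖ ⋃_{j ∈ S} H j`. -/
def IsConeComp (f : Fin N → ((Fin k → ℝ) →ᵃ[ℝ] ℝ)) (S : Finset (Fin N))
    (C : Set (Fin k → ℝ)) : Prop :=
  ∃ y, (∀ j ∈ S, f j y ≠ 0) ∧ C = connectedComponentIn {z | ∀ j ∈ S, f j z ≠ 0} y

/-- `C` is the cone `C⁺_X` of the vertex `X` with index set `S`: the unique connected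
component of `ℝ^k ∖ ⋃_{j ∈ S} H j` on which `f0 - f0 X` is everywhere positive. -/
def IsPosCone (f : Fin N → ((Fin k → ℝ) →ᵃ[ℝ] ℝ)) (f0 : (Fin k → ℝ) →ₗ[ℝ] ℝ)
    (S : Finset (Fin N)) (X : Fin k → ℝ) (C : Set (Fin k → ℝ)) : Prop :=
  IsConeComp f S C ∧ ∀ y ∈ C, f0 X < f0 y

/-- `C` is the cone `C⁻_X` of the vertex `X` with index set `S`: the unique connected
component of `ℝ^k ∖ ⋃_{j ∈ S} H j` on which `f0 - f0 X` is everywhere negative. -/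
def IsNegCone (f : Fin N → ((Fin k → ℝ) →ᵃ[ℝ] ℝ)) (f0 : (Fin k → ℝ) →ₗ[ℝ] ℝ)
    (S : Finset (Fin N)) (X : Fin k → ℝ) (C : Set (Fin k → ℝ)) : Prop :=
  IsConeComp f S C ∧ ∀ y ∈ C, f0 y < f0 X

/-- `Δ` is the domain `Δ_X` of the vertex `X`: the unique arrangement domain whose
closure contains `X` and on which `f0 - f0 X > 0`. -/
def IsDomOf (f : Fin N → ((Fin k → ℝ) →ᵃ[ℝ] ℝ)) (f0 : (Fin k → ℝ) →ₗ[ℝ] ℝ)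
    (X : Fin k → ℝ) (Δ : Set (Fin k → ℝ)) : Prop :=
  IsDomain f Δ ∧ X ∈ closure Δ ∧ ∀ y ∈ Δ, f0 X < f0 y

/-- `Δ` is the domain `Δ⁻_X` of the vertex `X`: the unique arrangement domain whose
closure contains `X` and on which `f0 - f0 X < 0`. -/
def IsNegDomOf (f : Fin N → ((Fin k → ℝ) →ᵃ[ℝ] ℝ)) (f0 : (Fin k → ℝ) →ₗ[ℝ] ℝ)
    (X : Fin k → ℝ) (Δ : Set (Fin k → ℝ)) : Prop :=
  IsDomain f Δ ∧ X ∈ closure Δ ∧ ∀ y ∈ Δ, f0 y < f0 X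

/-- `Δ` belongs to `𝒟⁺`: it is an arrangement domain on which `f0` is bounded
from below. -/
def MemDplus (f : Fin N → ((Fin k → ℝ) →ᵃ[ℝ] ℝ)) (f0 : (Fin k → ℝ) →ₗ[ℝ] ℝ)
    (Δ : Set (Fin k → ℝ)) : Prop :=
  IsDomain f Δ ∧ BddBelow (f0 '' Δ)

/-- `Δ` belongs to `𝒟⁻`: it is an arrangement domain on which `f0` is bounded
from above. -/
def MemDminus (f : Fin N → ((Fin k → ℝ) →ᵃ[ℝ] ℝ)) (f0 : (Fin k → ℝ) →ₗ[ℝ] ℝ)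
    (Δ : Set (Fin k → ℝ)) : Prop :=
  IsDomain f Δ ∧ BddAbove (f0 '' Δ)

/-- The set `W` (a hyperplane) separates `S` from `T`: they lie in different connected
components of the complement of `W`. -/
def Separates {α : Type*} [TopologicalSpace α] (W S T : Set α) : Prop :=
  ∃ x ∈ S, ∃ y ∈ T, S ⊆ connectedComponentIn Wᶜ x ∧ T ⊆ connectedComponentIn Wᶜ y ∧
    connectedComponentIn Wᶜ x ≠ connectedComponentIn Wᶜ y

/-- The index set of `ℋ(Δ, Δ')`, the set of hyperplanes separating `Δ` from `Δ'`. -/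
def SepSet (f : Fin N → ((Fin k → ℝ) →ᵃ[ℝ] ℝ)) (Δ Δ' : Set (Fin k → ℝ)) :
    Finset (Fin N) :=
  Finset.univ.filter fun j => Separates (Hyp f j) Δ Δ'

lemma aff_add (g : (Fin k → ℝ) →ᵃ[ℝ] ℝ) (x v : Fin k → ℝ) : g (x + v) = g x + g.linear v := by
  have := g.map_vadd x v
  simp only [vadd_eq_add] at this
  rw [add_comm x v, this, add_comm]

/-- The positive cone in terms of signs. -/
lemma cone_eq (f : Fin N → ((Fin k → ℝ) →ᵃ[ℝ] ℝ)) (f0 : (Fin k → ℝ) →ₗ[ℝ] ℝ)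
    (Sx : Finset (Fin N)) (X : Fin k → ℝ) (C : Set (Fin k → ℝ)) (hC : IsPosCone f f0 Sx X C)
    (e : Fin N → (Fin k → ℝ))
    (he : ∀ j ∈ Sx, (∀ i ∈ Sx.erase j, (f i).linear (e j) = 0) ∧ f0 (e j) = 1)
    (hc : ∀ j ∈ Sx, (f j).linear (e j) ≠ 0) :
    C = {x | ∀ j ∈ Sx, 0 < f j x / (f j).linear (e j)} := by
  obtain ⟨⟨y, hy, hCy⟩, hpos⟩ := hC
  have hcont : ∀ j, Continuous (f j) := fun j => (f j).continuous_of_finiteDimensional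
  have hyC : y ∈ C := by
    rw [hCy]; exact mem_connectedComponentIn hy
  have hO : {x | ∀ j ∈ Sx, 0 < f j x * f j y} ⊆ C := by
    rw [hCy]
    apply IsPreconnected.subset_connectedComponentIn
    · apply Convex.isPreconnected
      have : {x | ∀ j ∈ Sx, 0 < f j x * f j y} = ⋂ j ∈ Sx, {x | 0 < f j x * f j y} := by
        ext x; simp
      rw [this]
      refine convex_iInter₂ fun j _ => ?_
      intro a ha b hb s t hs ht hst
      simp only [Set.mem_ofPred_eq] at ha hb ⊢
      rw [Convex.combo_affine_apply hst]
      simp only [smul_eq_mul]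
      have : (s * f j a + t * f j b) * f j y = s * (f j a * f j y) + t * (f j b * f j y) := by ring
      rw [this]
      rcases hs.eq_or_lt with rfl | hs'
      · have : t = 1 := by linarith
        subst this; linarith
      · have := mul_pos hs' ha
        have := mul_nonneg ht hb.le
        linarith
    · intro j hj
      exact mul_self_pos.2 (hy j hj)
    · intro x hx j hj h0
      have := hx j hj
      rw [h0] at this; simp at this
  have hyP : ∀ j ∈ Sx, 0 < f j y / (f j).linear (e j) := by
    intro j hj
    by_contra hneg
    have hcj := hc j hj
    have hlt : f j y / (f j).linear (e j) < 0 :=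
      lt_of_le_of_ne (not_lt.1 hneg) (div_ne_zero (hy j hj) hcj)
    have hlt' : f j y * (f j).linear (e j) < 0 := by
      rcases div_neg_iff.1 hlt with h | h
      · exact mul_neg_of_pos_of_neg h.1 h.2
      · exact mul_neg_of_neg_of_pos h.1 h.2
    have hT := hpos y hyC
    have hz : y + (-(f0 y - f0 X)) • e j ∈ C := by
      apply hO
      intro i hi
      rw [aff_add, map_smul, smul_eq_mul]
      by_cases hij : i = j
      · subst hij
        have h1 := mul_self_pos.2 (hy i hi)
        nlinarith [mul_neg_of_pos_of_neg (sub_pos.2 hT) hlt']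
      · rw [(he j hj).1 i (Finset.mem_erase.2 ⟨hij, hi⟩)]
        simpa using mul_self_pos.2 (hy i hi)
    have := hpos _ hz
    rw [map_add, map_smul, (he j hj).2, smul_eq_mul] at this
    linarith
  apply Set.Subset.antisymm
  · intro x hx j hj
    by_contra hneg
    have hpre : IsPreconnected C := by rw [hCy]; exact isPreconnected_connectedComponentIn
    have hsub := hpre.intermediate_value hx hyC
      (f := fun x => f j x / (f j).linear (e j)) ((hcont j).div_const _).continuousOn
    obtain ⟨z, hz, hz0⟩ := hsub ⟨not_lt.1 hneg, (hyP j hj).le⟩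
    have hzC : z ∈ {z | ∀ j ∈ Sx, f j z ≠ 0} := by
      rw [hCy] at hz; exact connectedComponentIn_subset _ _ hz
    exact div_ne_zero (hzC j hj) (hc j hj) hz0
  · intro x hx
    apply hO
    intro j hj
    have h1 := mul_pos (hx j hj) (hyP j hj)
    have hcj := hc j hj
    have h2 : f j x * f j y = (f j x / (f j).linear (e j) * (f j y / (f j).linear (e j)))
        * ((f j).linear (e j) * (f j).linear (e j)) := by field_simp
    rw [h2]
    exact mul_pos h1 (mul_self_pos.2 hcj)

/-- The analytic core: dominated convergence. -/
lemma core_tendsto {ι : Type*} (R : Finset ι) (g : ι → ((Fin k → ℝ) →ᵃ[ℝ] ℝ))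
    (β : ι → ℝ) (hβ : ∀ r, 0 < β r) (a : Fin k → ℝ) (ha : ∀ i, 0 < a i)
    (X : Fin k → ℝ) (E : (Fin k → ℝ) →ₗ[ℝ] (Fin k → ℝ)) :
    Tendsto (fun lam : ℝ => ∫ t in {t : Fin k → ℝ | ∀ i, 0 < t i},
        (∏ i, Real.exp (-t i) * t i ^ (a i - 1)) * ∏ r ∈ R, |g r (X + lam⁻¹ • E t)| ^ β r) atTop
      (nhds ((∏ i, Real.Gamma (a i)) * ∏ r ∈ R, |g r X| ^ β r)) := by
  have hset : {t : Fin k → ℝ | ∀ i, 0 < t i} = Set.univ.pi (fun _ => Set.Ioi (0:ℝ)) := by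
    ext; simp
  have hmeas : MeasurableSet {t : Fin k → ℝ | ∀ i, 0 < t i} := by
    rw [hset]; exact MeasurableSet.univ_pi fun _ => measurableSet_Ioi
  have hvol : (volume : Measure (Fin k → ℝ)).restrict {t : Fin k → ℝ | ∀ i, 0 < t i}
      = Measure.pi (fun _ => (volume : Measure ℝ).restrict (Set.Ioi 0)) := by
    rw [hset, volume_pi, Measure.restrict_pi_pi]
  have hEc : Continuous E := E.continuous_of_finiteDimensional
  have hgc : ∀ r, Continuous (g r) := fun r => (g r).continuous_of_finiteDimensional
  -- the limit as an integral
  have hlim : ∫ t in {t : Fin k → ℝ | ∀ i, 0 < t i},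
      (∏ i, Real.exp (-t i) * t i ^ (a i - 1)) * ∏ r ∈ R, |g r X| ^ β r
      = (∏ i, Real.Gamma (a i)) * ∏ r ∈ R, |g r X| ^ β r := by
    rw [integral_mul_const, hvol,
      integral_fintype_prod_eq_prod (f := fun i (x : ℝ) => Real.exp (-x) * x ^ (a i - 1))]
    congr 1
    refine Finset.prod_congr rfl fun i _ => ?_
    rw [Real.Gamma_eq_integral (ha i)]
  rw [← hlim]
  -- bounds
  have hM : ∀ r, ∃ M : ℝ, 0 < M ∧ ∀ lam : ℝ, 1 ≤ lam → ∀ t : Fin k → ℝ, (∀ i, 0 < t i) →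
      |g r (X + lam⁻¹ • E t)| ≤ M * (1 + ∑ i, t i) := by
    intro r
    set L := (g r).linear ∘ₗ E with hL
    refine ⟨1 + |g r X| + ∑ i, |L (Pi.single i 1)|, by positivity, ?_⟩
    intro lam hlam t ht
    have hl1 : lam⁻¹ ≤ 1 := inv_le_one_of_one_le₀ hlam
    have hl0 : 0 ≤ lam⁻¹ := by positivity
    have hLt : |L t| ≤ (∑ i, |L (Pi.single i 1)|) * ∑ i, t i := by
      have : L t = ∑ i, t i * L (Pi.single i 1) := by
        conv_lhs => rw [← (Pi.basisFun ℝ (Fin k)).sum_repr t]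
        simp
      rw [this, Finset.sum_mul]
      refine (Finset.abs_sum_le_sum_abs _ _).trans (Finset.sum_le_sum fun i _ => ?_)
      rw [abs_mul, abs_of_pos (ht i), mul_comm]
      gcongr
      exact Finset.single_le_sum (f := t) (fun j _ => (ht j).le) (Finset.mem_univ i)
    have hs : 0 ≤ ∑ i, t i := Finset.sum_nonneg fun i _ => (ht i).le
    have h1 : g r (X + lam⁻¹ • E t) = g r X + lam⁻¹ * L t := by
      rw [aff_add, map_smul, smul_eq_mul]; rfl
    rw [h1]
    have h2 : |lam⁻¹ * L t| ≤ |L t| := by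
      rw [abs_mul, abs_of_nonneg hl0]
      exact mul_le_of_le_one_left (abs_nonneg _) hl1
    have h3 := abs_add_le (g r X) (lam⁻¹ * L t)
    have h4 : 0 ≤ ∑ i, |L (Pi.single i 1)| := by positivity
    nlinarith [abs_nonneg (g r X), mul_nonneg (abs_nonneg (g r X)) hs]
  choose M hM0 hM using hM
  set A := ∑ r ∈ R, β r with hA
  have hA0 : 0 ≤ A := Finset.sum_nonneg fun r _ => (hβ r).le
  set ε : ℝ := 1 / (2 * (A + 1)) with hε
  have hε0 : 0 < ε := by positivity
  have hε1 : ε ≤ 1 := by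
    rw [hε, div_le_one (by positivity)]; linarith
  have hεA : ε * A ≤ 1 / 2 := by
    rw [hε, div_mul_eq_mul_div, div_le_div_iff₀ (by positivity) (by positivity)]; linarith
  have hexp : ∀ s : ℝ, 0 ≤ s → 1 + s ≤ ε⁻¹ * Real.exp (ε * s) := by
    intro s hs
    rw [inv_mul_eq_div, le_div_iff₀ hε0]
    have := Real.add_one_le_exp (ε * s)
    nlinarith
  set K : ℝ := ∏ r ∈ R, (M r * ε⁻¹) ^ β r with hK
  have hK0 : 0 ≤ K := Finset.prod_nonneg fun r _ => by have := hM0 r; positivity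
  have hprod : ∀ lam : ℝ, 1 ≤ lam → ∀ t : Fin k → ℝ, (∀ i, 0 < t i) →
      ∏ r ∈ R, |g r (X + lam⁻¹ • E t)| ^ β r ≤ K * Real.exp ((∑ i, t i) / 2) := by
    intro lam hlam t ht
    have hs : 0 ≤ ∑ i, t i := Finset.sum_nonneg fun i _ => (ht i).le
    calc ∏ r ∈ R, |g r (X + lam⁻¹ • E t)| ^ β r
        ≤ ∏ r ∈ R, ((M r * ε⁻¹) ^ β r * Real.exp ((ε * ∑ i, t i) * β r)) := by
          refine Finset.prod_le_prod (fun r _ => by positivity) fun r _ => ?_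
          have hMr := hM0 r
          rw [Real.exp_mul, ← Real.mul_rpow (by positivity) (by positivity)]
          refine Real.rpow_le_rpow (abs_nonneg _) ?_ (hβ r).le
          refine (hM r lam hlam t ht).trans ?_
          rw [mul_assoc]
          exact mul_le_mul_of_nonneg_left (hexp _ hs) hMr.le
      _ = K * Real.exp ((ε * ∑ i, t i) * A) := by
          rw [Finset.prod_mul_distrib, ← Real.exp_sum, ← Finset.mul_sum]
      _ ≤ K * Real.exp ((∑ i, t i) / 2) := by
          gcongr
          nlinarith
  refine tendsto_integral_filter_of_dominated_convergence
    (fun t => K * ∏ i, (Real.exp (-(1/2) * t i) * t i ^ (a i - 1))) ?_ ?_ ?_ ?_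
  · refine Eventually.of_forall fun lam => Measurable.aestronglyMeasurable ?_
    refine Measurable.mul ?_ ?_
    · refine Finset.measurable_fun_prod _ fun i _ => ?_
      fun_prop
    · refine Finset.measurable_fun_prod _ fun r _ => ?_
      have : Continuous fun t => |g r (X + lam⁻¹ • E t)| := by
        have := hgc r
        fun_prop
      exact this.measurable.pow_const _
  · filter_upwards [eventually_ge_atTop 1] with lam hlam
    filter_upwards [ae_restrict_mem hmeas] with t ht
    have hpos : 0 ≤ ∏ i, Real.exp (-t i) * t i ^ (a i - 1) :=
      Finset.prod_nonneg fun i _ => by have := ht i; positivity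
    rw [Real.norm_of_nonneg (mul_nonneg hpos (Finset.prod_nonneg fun r _ => by positivity))]
    refine (mul_le_mul_of_nonneg_left (hprod lam hlam t ht) hpos).trans (le_of_eq ?_)
    rw [Finset.sum_div, Real.exp_sum, mul_left_comm, ← Finset.prod_mul_distrib]
    congr 1
    refine Finset.prod_congr rfl fun i _ => ?_
    rw [mul_right_comm, ← Real.exp_add]
    congr 2
    ring
  · refine Integrable.const_mul ?_ _
    rw [hvol]
    refine Integrable.fintype_prod (f := fun i (x : ℝ) => Real.exp (-(1/2) * x) * x ^ (a i - 1))
      fun i => ?_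
    have := integrableOn_rpow_mul_exp_neg_mul_rpow (p := 1) (s := a i - 1) (b := 1/2)
      (by linarith [ha i]) one_pos (by norm_num)
    simpa only [Real.rpow_one, mul_comm, IntegrableOn] using this
  · refine Eventually.of_forall fun t => Tendsto.const_mul _ ?_
    refine tendsto_finsetProd _ fun r _ => ?_
    refine Tendsto.rpow_const ?_ (Or.inr (hβ r).le)
    refine Tendsto.abs ?_
    have h1 : Tendsto (fun lam : ℝ => X + lam⁻¹ • E t) atTop (nhds (X + (0:ℝ) • E t)) :=
      (tendsto_inv_atTop_zero.smul_const _).const_add _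
    rw [zero_smul, add_zero] at h1
    exact ((hgc r).tendsto X).comp h1

/-- as `λ → +∞` along the real axis, the hypergeometric integral over the
cone `C⁺_X` is asymptotically equivalent to
`e^{-λ f0 X} λ^{-α_X} ∏_{j ∈ X} Γ(α j) |l j (e_{X∖{j}})| ^ α j ∏_{r ∉ X} |f r X| ^ α r`. -/
theorem stmt_2 {k N : ℕ} (hk : 1 ≤ k) (hkN : k ≤ N)
    (f : Fin N → ((Fin k → ℝ) →ᵃ[ℝ] ℝ)) (hf : Generic f)
    (f0 : (Fin k → ℝ) →ₗ[ℝ] ℝ) (hf0 : GenericLin f f0)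
    (α : Fin N → ℝ) (hα : ∀ j, 0 < α j)
    (Sx : Finset (Fin N)) (hcard : Sx.card = k) (X : Fin k → ℝ)
    (hX : IsVertexOf f Sx X)
    (Cx : Set (Fin k → ℝ)) (hCx : IsPosCone f f0 Sx X Cx)
    (e : Fin N → (Fin k → ℝ))
    (he : ∀ j ∈ Sx, (∀ i ∈ Sx.erase j, (f i).linear (e j) = 0) ∧ f0 (e j) = 1)
    (dAbs : ℝ)
    (hd : dAbs = |(Matrix.of fun i c : Fin k =>
      (f ((Sx.orderIsoOfFin hcard i : Sx) : Fin N)).linear (Pi.single c 1)).det|) :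
    Asymptotics.IsEquivalent atTop
      (fun lam : ℝ => ∫ x in Cx,
        Real.exp (-lam * f0 x) * (∏ j, |f j x| ^ α j) * dAbs * (∏ j ∈ Sx, |f j x|)⁻¹)
      (fun lam : ℝ => Real.exp (-lam * f0 X) * lam ^ (-(∑ j ∈ Sx, α j)) *
        ((∏ j ∈ Sx, Real.Gamma (α j) * |(f j).linear (e j)| ^ α j) *
          ∏ j ∈ Sxᶜ, |f j X| ^ α j)) := by
  have hXf := hX.2
  set σ : Fin k → Fin N := fun i => ((Sx.orderIsoOfFin hcard i : Sx) : Fin N) with hσ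
  have hσmem : ∀ i, σ i ∈ Sx := fun i => (Sx.orderIsoOfFin hcard i).2
  have hσinj : Function.Injective σ := fun i j h =>
    (Sx.orderIsoOfFin hcard).injective (Subtype.ext h)
  have hσsurj : ∀ j ∈ Sx, ∃ i, σ i = j := fun j hj =>
    ⟨(Sx.orderIsoOfFin hcard).symm ⟨j, hj⟩, congrArg Subtype.val ((Sx.orderIsoOfFin hcard).apply_symm_apply ⟨j, hj⟩)⟩
  have himg : Sx = Finset.univ.image σ := by
    ext j; simp only [Finset.mem_image, Finset.mem_univ, true_and]
    exact ⟨hσsurj j, by rintro ⟨i, rfl⟩; exact hσmem i⟩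
  have hprodσ : ∀ g : Fin N → ℝ, ∏ j ∈ Sx, g j = ∏ i, g (σ i) := by
    intro g; conv_lhs => rw [himg]
    exact Finset.prod_image fun _ _ _ _ h => hσinj h
  have hsumσ : ∀ g : Fin N → ℝ, ∑ j ∈ Sx, g j = ∑ i, g (σ i) := by
    intro g; conv_lhs => rw [himg]
    exact Finset.sum_image fun _ _ _ _ h => hσinj h
  have huniq : ∀ x, (∀ j ∈ Sx, f j x = 0) → x = X := fun x hx =>
    (hf.2.1 Sx hcard).unique hx hXf
  have hc : ∀ j ∈ Sx, (f j).linear (e j) ≠ 0 := by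
    intro j hj h0
    have : X + e j = X := by
      apply huniq
      intro i hi
      rw [aff_add, hXf i hi, zero_add]
      by_cases hij : i = j
      · rw [hij, h0]
      · exact (he j hj).1 i (Finset.mem_erase.2 ⟨hij, hi⟩)
    have h1 := (he j hj).2
    rw [add_eq_left.1 this, map_zero] at h1
    exact zero_ne_one h1
  have hfX : ∀ r ∈ Sxᶜ, f r X ≠ 0 := by
    intro r hr h0
    have hr' : r ∉ Sx := Finset.mem_compl.1 hr
    refine hf.2.2 (insert r Sx) (by rw [Finset.card_insert_of_notMem hr', hcard]) ⟨X, ?_⟩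
    intro j hj
    rcases Finset.mem_insert.1 hj with rfl | h
    · exact h0
    · exact hXf j h
  set c : Fin k → ℝ := fun i => (f (σ i)).linear (e (σ i)) with hcdef
  have hc0 : ∀ i, c i ≠ 0 := fun i => hc _ (hσmem i)
  have hoff : ∀ i j, i ≠ j → (f (σ i)).linear (e (σ j)) = 0 := fun i j hij =>
    (he _ (hσmem j)).1 _ (Finset.mem_erase.2 ⟨fun h => hij (hσinj h), hσmem i⟩)
  set Mt : Matrix (Fin k) (Fin k) ℝ := Matrix.of fun a i => e (σ i) a with hMt
  set E : (Fin k → ℝ) →ₗ[ℝ] (Fin k → ℝ) := Matrix.toLin' Mt with hE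
  have hEsum : ∀ t, E t = ∑ i, t i • e (σ i) := by
    intro t; ext a
    simp [hE, hMt, Matrix.mulVec, dotProduct, mul_comm]
  have hlE : ∀ i t, (f (σ i)).linear (E t) = c i * t i := by
    intro i t
    rw [hEsum, map_sum, Finset.sum_eq_single i]
    · simp [hcdef, mul_comm]
    · intro j _ hj; rw [map_smul, hoff i j hj.symm, smul_zero]
    · simp
  have hf0E : ∀ t, f0 (E t) = ∑ i, t i := by
    intro t
    rw [hEsum, map_sum]
    exact Finset.sum_congr rfl fun i _ => by rw [map_smul, (he _ (hσmem i)).2]; simp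
  have hdet : dAbs * |LinearMap.det E| = ∏ i, |c i| := by
    rw [hd, hE, LinearMap.det_toLin', ← abs_mul, ← Matrix.det_mul, ← Finset.abs_prod,
      ← Matrix.det_diagonal]
    congr 2
    ext i j
    have hlin : ∀ v : Fin k → ℝ, (f (σ i)).linear v
        = ∑ a, (f (σ i)).linear (Pi.single a 1) * v a := by
      intro v
      conv_lhs => rw [← (Pi.basisFun ℝ (Fin k)).sum_repr v]
      simp [mul_comm]
    rw [Matrix.mul_apply]
    have := hlin (e (σ j))
    simp only [Matrix.of_apply, hMt] at this ⊢
    rw [← this, Matrix.diagonal_apply]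
    split_ifs with h
    · subst h; rfl
    · exact hoff i j h
  have hCeq := cone_eq f f0 Sx X Cx hCx e he hc
  set P : Set (Fin k → ℝ) := {t | ∀ i, 0 < t i} with hP
  have hPm : MeasurableSet P := by
    have : P = Set.univ.pi (fun _ => Set.Ioi (0:ℝ)) := by ext; simp [hP]
    rw [this]; exact MeasurableSet.univ_pi fun _ => measurableSet_Ioi
  have himage : ∀ lam : ℝ, 0 < lam → (fun t => X + lam⁻¹ • E t) '' P = Cx := by
    intro lam hlam
    rw [hCeq]
    ext x
    constructor
    · rintro ⟨t, ht, rfl⟩ j hj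
      obtain ⟨i, rfl⟩ := hσsurj j hj
      have h1 : f (σ i) (X + lam⁻¹ • E t) = c i * (lam⁻¹ * t i) := by
        rw [aff_add, hXf _ hj, map_smul, hlE, smul_eq_mul]; ring
      have h2 := hc0 i
      have h3 : 0 < t i := ht i
      show 0 < f (σ i) (X + lam⁻¹ • E t) / c i
      rw [h1, mul_div_cancel_left₀ _ h2]
      positivity
    · intro hx
      refine ⟨fun i => lam * (f (σ i) x / c i), fun i => mul_pos hlam (hx _ (hσmem i)), ?_⟩
      have h0 : x + (-(lam⁻¹ • E fun i => lam * (f (σ i) x / c i))) = X := by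
        apply huniq
        intro j hj
        obtain ⟨i, rfl⟩ := hσsurj j hj
        rw [aff_add, map_neg, map_smul, hlE, smul_eq_mul]
        have h2 := hc0 i
        field_simp
        ring
      show X + lam⁻¹ • E _ = x
      rw [← h0]; simp
  have hinj : ∀ lam : ℝ, 0 < lam → Set.InjOn (fun t => X + lam⁻¹ • E t) P := by
    intro lam hlam t _ t' _ h
    have h1 : E t = E t' := by
      have h2 : lam⁻¹ • E t = lam⁻¹ • E t' := add_left_cancel h
      exact smul_right_injective _ (inv_ne_zero hlam.ne') h2
    ext i
    have h3 := hlE i t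
    rw [h1, hlE] at h3
    exact (mul_left_cancel₀ (hc0 i) h3).symm
  set J : ℝ → ℝ := fun lam => ∫ t in P,
    (∏ i, Real.exp (-t i) * t i ^ (α (σ i) - 1)) * ∏ r ∈ Sxᶜ, |f r (X + lam⁻¹ • E t)| ^ α r with hJ
  have hJlim := core_tendsto Sxᶜ f α hα (fun i => α (σ i)) (fun i => hα _) X E
  have hmain : ∀ lam : ℝ, 0 < lam → (∫ x in Cx,
        Real.exp (-lam * f0 x) * (∏ j, |f j x| ^ α j) * dAbs * (∏ j ∈ Sx, |f j x|)⁻¹)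
      = (Real.exp (-lam * f0 X) * lam ^ (-(∑ j ∈ Sx, α j)) * ∏ i, |c i| ^ α (σ i)) * J lam := by
    intro lam hlam
    set Ec : (Fin k → ℝ) →L[ℝ] (Fin k → ℝ) := LinearMap.toContinuousLinearMap E with hEc
    have hderiv : ∀ t ∈ P, HasFDerivWithinAt (fun t => X + lam⁻¹ • E t) (lam⁻¹ • Ec) P t := by
      intro t _
      exact (((Ec.hasFDerivAt (x := t)).const_smul lam⁻¹).const_add X).hasFDerivWithinAt
    rw [← himage lam hlam, integral_image_eq_integral_abs_det_fderiv_smul volume hPm hderiv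
      (hinj lam hlam), hJ, ← integral_const_mul]
    refine setIntegral_congr_fun hPm fun t ht => ?_
    have htpos : ∀ i, 0 < t i := ht
    have hdetl : |(lam⁻¹ • Ec).det| = (∏ _i : Fin k, lam⁻¹) * |LinearMap.det E| := by
      have h1 : (lam⁻¹ • Ec).det = LinearMap.det (lam⁻¹ • E) := rfl
      rw [h1, LinearMap.det_smul, abs_mul, abs_of_pos (by positivity)]
      simp
    have hfi : ∀ i, |f (σ i) (X + lam⁻¹ • E t)| = lam⁻¹ * t i * |c i| := by
      intro i
      have := htpos i
      rw [aff_add, hXf _ (hσmem i), map_smul, hlE, smul_eq_mul, zero_add, abs_mul, abs_mul,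
        abs_of_pos this, abs_of_pos (inv_pos.2 hlam)]
      ring
    have hexp : Real.exp (-lam * f0 (X + lam⁻¹ • E t))
        = Real.exp (-lam * f0 X) * ∏ i, Real.exp (-t i) := by
      rw [← Real.exp_sum, ← Real.exp_add, map_add, map_smul, hf0E, smul_eq_mul,
        Finset.sum_neg_distrib]
      congr 1
      field_simp
      ring
    have hlamp : lam ^ (-(∑ j ∈ Sx, α j)) = ∏ i, lam ^ (-α (σ i)) := by
      rw [hsumσ, ← Finset.sum_neg_distrib, Real.rpow_sum_of_pos hlam]
    have hfac : (∏ i, lam ^ (-α (σ i))) * (∏ i, |c i| ^ α (σ i)) * (∏ i, t i ^ (α (σ i) - 1))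
        = (∏ _i : Fin k, lam⁻¹) * (∏ i, |c i|) * (∏ i, (lam⁻¹ * t i * |c i|) ^ α (σ i))
          * (∏ i, (lam⁻¹ * t i * |c i|))⁻¹ := by
      rw [← Finset.prod_inv_distrib]
      simp only [← Finset.prod_mul_distrib]
      refine Finset.prod_congr rfl fun i _ => ?_
      have h1 := htpos i
      have h2 : 0 < |c i| := abs_pos.2 (hc0 i)
      rw [Real.mul_rpow (by positivity) h2.le, Real.mul_rpow (by positivity) h1.le,
        Real.rpow_sub_one h1.ne', Real.rpow_neg hlam.le, Real.inv_rpow hlam.le]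
      field_simp
    show |(lam⁻¹ • Ec).det| • (Real.exp (-lam * f0 (X + lam⁻¹ • E t)) *
      (∏ j, |f j (X + lam⁻¹ • E t)| ^ α j) * dAbs * (∏ j ∈ Sx, |f j (X + lam⁻¹ • E t)|)⁻¹) = _
    rw [hdetl, hexp, ← Finset.prod_mul_prod_compl Sx, hprodσ, hprodσ, hlamp,
      Finset.prod_mul_distrib, smul_eq_mul]
    simp only [hfi]
    set Q := ∏ r ∈ Sxᶜ, |f r (X + lam⁻¹ • E t)| ^ α r
    set G := ∏ i, Real.exp (-t i)
    rw [← hdet] at hfac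
    linear_combination (-(Real.exp (-lam * f0 X) * G * Q)) * hfac
  have hL0 : (∏ i, Real.Gamma (α (σ i))) * ∏ r ∈ Sxᶜ, |f r X| ^ α r ≠ 0 := by
    refine (mul_pos (Finset.prod_pos fun i _ => Real.Gamma_pos_of_pos (hα _))
      (Finset.prod_pos fun r hr => Real.rpow_pos_of_pos (abs_pos.2 (hfX r hr)) _)).ne'
  have hJeq := (Asymptotics.isEquivalent_const_iff_tendsto hL0).2 hJlim
  have hfin := (Asymptotics.IsEquivalent.refl (l := atTop) (u := fun lam : ℝ =>
    Real.exp (-lam * f0 X) * lam ^ (-(∑ j ∈ Sx, α j)) * ∏ i, |c i| ^ α (σ i))).mul hJeq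
  refine (hfin.congr_left ?_).congr_right ?_
  · filter_upwards [eventually_gt_atTop 0] with lam hlam
    exact (hmain lam hlam).symm
  · refine Eventually.of_forall fun lam => ?_
    simp only [Pi.mul_apply, Function.const_apply]
    rw [hprodσ, Finset.prod_mul_distrib]
    ring

end HypArr
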